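/- arXiv:0807.1838 — 3 statements merged into one kernel-verified Lean document; each statement's English description precedes it below -/
import Mathlib

section
/- Let J ⊆ I be ideals in ℂ[x] = ℂ[x₁,…,xₙ] with dim_ℂ ℂ[x]/(J:I) < ∞, and let {p₁,…,pₛ} = V(J) \ V(I) (a finite set). Then there exists a positive integer k such that the natural map induces a ℂ-algebra isomorphism ℂ[x]/J ≅ ℂ[x]/(J+Iᵏ) × ℂ[x]/(J+m_{p₁}ᵏ) × ⋯ × ℂ[x]/(J+m_{pₛ}ᵏ); in particular J = (J+Iᵏ) ∩ (J+m_{p₁}ᵏ) ∩ ⋯ ∩ (J+m_{pₛ}ᵏ). Moreover the same conclusion holds for every integer larger than k. -/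
open MvPolynomial

/-- The zero set `V(S)` of an ideal of `ℂ[x₁,…,xₙ]`. -/
def zeroSet {n : ℕ} (S : Ideal (MvPolynomial (Fin n) ℂ)) : Set (Fin n → ℂ) :=
  {p | ∀ f ∈ S, eval p f = 0}

/-- The maximal ideal `m_p` generated by `x₁ - p₁, …, xₙ - pₙ`. -/
noncomputable def mIdeal {n : ℕ} (p : Fin n → ℂ) : Ideal (MvPolynomial (Fin n) ℂ) :=
  Ideal.span (Set.range fun i => X i - C (p i))

theorem sub_C_mem_mIdeal {n : ℕ} (p : Fin n → ℂ) (f : MvPolynomial (Fin n) ℂ) :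
    f - C (eval p f) ∈ mIdeal p := by
  induction f using MvPolynomial.induction_on with
  | C a => simp
  | add f g hf hg =>
    have := add_mem hf hg
    convert this using 1
    simp only [map_add]; ring
  | mul_X f i hf =>
    have h1 : (X i - C (p i) : MvPolynomial (Fin n) ℂ) ∈ mIdeal p :=
      Ideal.subset_span ⟨i, rfl⟩
    have := add_mem (Ideal.mul_mem_left _ f h1) (Ideal.mul_mem_left _ (C (p i)) hf)
    convert this using 1
    simp only [map_mul, eval_X]; ring

theorem eval_mIdeal {n : ℕ} (p : Fin n → ℂ) (f : MvPolynomial (Fin n) ℂ)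
    (hf : f ∈ mIdeal p) : eval p f = 0 := by
  have : mIdeal p ≤ RingHom.ker (eval p) := by
    rw [mIdeal, Ideal.span_le]
    rintro _ ⟨i, rfl⟩
    simp [RingHom.mem_ker]
  exact this hf

theorem coprime_mIdeal {n : ℕ} (p : Fin n → ℂ) (A : Ideal (MvPolynomial (Fin n) ℂ))
    (f : MvPolynomial (Fin n) ℂ) (hf : f ∈ A) (h0 : eval p f ≠ 0) :
    IsCoprime A (mIdeal p) := by
  rw [Ideal.isCoprime_iff_exists]
  refine ⟨C (eval p f)⁻¹ * f, Ideal.mul_mem_left _ _ hf,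
    C (eval p f)⁻¹ * -(f - C (eval p f)),
    Ideal.mul_mem_left _ _ (neg_mem (sub_C_mem_mIdeal p f)), ?_⟩
  have : (C (eval p f)⁻¹ * C (eval p f) : MvPolynomial (Fin n) ℂ) = 1 := by
    rw [← C_mul, inv_mul_cancel₀ h0, C_1]
  linear_combination this

theorem prod_sup_le {R ι : Type*} [CommRing R] (J : Ideal R) (A : ι → Ideal R) (t : Finset ι) :
    ∏ i ∈ t, (J + A i) ≤ J ⊔ ∏ i ∈ t, A i := by
  classical
  induction t using Finset.induction with
  | empty => simp
  | insert a t ha ih =>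
    rw [Finset.prod_insert ha, Finset.prod_insert ha]
    refine (Ideal.mul_mono_right ih).trans ?_
    rw [Submodule.add_eq_sup, Ideal.sup_mul, Ideal.mul_sup (A a)]
    have h1 : J * (J ⊔ ∏ i ∈ t, A i) ≤ J := Ideal.mul_le_left
    have h2 : A a * J ≤ J := Ideal.mul_le_right
    exact sup_le (h1.trans le_sup_left) (sup_le (h2.trans le_sup_left) le_sup_right)

/-- The ideal `I` together with the ideals `m_{p_i}`, as one family. -/
noncomputable def fam {n s : ℕ} (I : Ideal (MvPolynomial (Fin n) ℂ)) (p : Fin s → (Fin n → ℂ)) :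
    Option (Fin s) → Ideal (MvPolynomial (Fin n) ℂ)
  | none => I
  | some i => mIdeal (p i)

theorem fam_coprime {n s : ℕ} (J I : Ideal (MvPolynomial (Fin n) ℂ)) (p : Fin s → (Fin n → ℂ))
    (hinj : Function.Injective p) (hrange : Set.range p = zeroSet J \ zeroSet I) :
    Pairwise (Function.onFun IsCoprime (fam I p)) := by
  have h1 : ∀ i, IsCoprime I (mIdeal (p i)) := by
    intro i
    have : p i ∈ zeroSet J \ zeroSet I := hrange ▸ ⟨i, rfl⟩
    have h2 := this.2
    simp only [zeroSet, Set.mem_setOf_eq, not_forall] at h2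
    obtain ⟨f, hf, h0⟩ := h2
    exact coprime_mIdeal _ _ f hf h0
  intro a b hab
  rcases a with _ | i <;> rcases b with _ | j
  · exact absurd rfl hab
  · exact h1 j
  · exact (h1 i).symm
  · have hij : p j ≠ p i := fun h => hab (by rw [hinj h])
    obtain ⟨c, hc⟩ := Function.ne_iff.mp hij
    refine coprime_mIdeal (p j) (mIdeal (p i)) (X c - C (p i c)) (Ideal.subset_span ⟨c, rfl⟩) ?_
    simpa [sub_eq_zero] using hc

theorem fam_pow_le {n s : ℕ} (J I : Ideal (MvPolynomial (Fin n) ℂ)) (hJI : J ≤ I)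
    (p : Fin s → (Fin n → ℂ)) (hrange : Set.range p = zeroSet J \ zeroSet I) :
    ∃ N : ℕ, (∏ o, fam I p o) ^ (N + 1) ≤ J := by
  have hrad : (∏ o, fam I p o) ≤ (J.colon (I : Set (MvPolynomial (Fin n) ℂ))).radical := by
    rw [← vanishingIdeal_zeroLocus_eq_radical (K := ℂ)]
    intro f hf
    rw [mem_vanishingIdeal_iff]
    intro q hq
    rw [mem_zeroLocus_iff] at hq
    have key : ∀ o, f ∈ fam I p o := fun o =>
      (Ideal.prod_le_inf.trans (Finset.inf_le (Finset.mem_univ o))) hf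
    have hae : ∀ g : MvPolynomial (Fin n) ℂ, aeval q g = eval q g := fun g => by
      rw [aeval_eq_eval]
    rw [hae]
    by_cases hqI : q ∈ zeroSet I
    · exact hqI f (key none)
    · have hqJ : q ∈ zeroSet J := by
        intro g hg
        have := hq g (Submodule.mem_colon.mpr fun x _ => by
          simpa [mul_comm] using Ideal.mul_mem_right x J hg)
        rwa [hae] at this
      obtain ⟨i, rfl⟩ : q ∈ Set.range p := hrange ▸ ⟨hqJ, hqI⟩
      exact eval_mIdeal _ _ (key (some i))
  obtain ⟨N, hN⟩ := Ideal.exists_pow_le_of_le_radical_of_fg hrad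
    (IsNoetherian.noetherian _)
  refine ⟨N, ?_⟩
  rw [pow_succ]
  have hI : (∏ o, fam I p o) ≤ I :=
    Ideal.prod_le_inf.trans (Finset.inf_le (Finset.mem_univ none))
  refine (Ideal.mul_mono hN hI).trans ?_
  rw [Ideal.mul_le]
  intro r hr x hx
  exact Submodule.mem_colon.mp hr x hx

/-- Proposition 1: there is a positive integer `k` (and the same holds for any
larger integer `l`) such that the natural map induces a `ℂ`-algebra isomorphism
`ℂ[x]/J ≅ ℂ[x]/(J+Iˡ) × ∏ᵢ ℂ[x]/(J+m_{pᵢ}ˡ)`; in particular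
`J = (J+Iˡ) ∩ ⋂ᵢ (J+m_{pᵢ}ˡ)`. -/
theorem stmt_0 {n : ℕ} (J I : Ideal (MvPolynomial (Fin n) ℂ)) (hJI : J ≤ I)
    (hfin : FiniteDimensional ℂ (MvPolynomial (Fin n) ℂ ⧸ J.colon I))
    (s : ℕ) (p : Fin s → (Fin n → ℂ)) (hinj : Function.Injective p)
    (hrange : Set.range p = zeroSet J \ zeroSet I) :
    ∃ k : ℕ, 0 < k ∧ ∀ l : ℕ, k ≤ l →
      (∃ e : (MvPolynomial (Fin n) ℂ ⧸ J) ≃ₐ[ℂ]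
          (MvPolynomial (Fin n) ℂ ⧸ (J + I ^ l)) ×
          (∀ i : Fin s, MvPolynomial (Fin n) ℂ ⧸ (J + mIdeal (p i) ^ l)),
        ∀ f : MvPolynomial (Fin n) ℂ,
          e (Ideal.Quotient.mk J f) =
            (Ideal.Quotient.mk (J + I ^ l) f,
             fun i => Ideal.Quotient.mk (J + mIdeal (p i) ^ l) f)) ∧
      J = (J + I ^ l) ⊓ ⨅ i : Fin s, (J + mIdeal (p i) ^ l) := by
  obtain ⟨N, hN⟩ := fam_pow_le J I hJI p hrange
  refine ⟨N + 1, N.succ_pos, fun l hl => ?_⟩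
  have hc := fam_coprime J I p hinj hrange
  have hc' : Pairwise (Function.onFun IsCoprime (fun o => J + fam I p o ^ l)) := by
    intro a b hab
    have h : IsCoprime (fam I p a ^ l) (fam I p b ^ l) := (hc hab).pow
    rw [Ideal.isCoprime_iff_sup_eq] at h
    change IsCoprime (J + fam I p a ^ l) (J + fam I p b ^ l)
    rw [Ideal.isCoprime_iff_sup_eq, eq_top_iff, ← h]
    exact sup_le_sup le_sup_right le_sup_right
  have hinf : (⨅ o, (J + fam I p o ^ l)) ≤ J := by
    have h1 := Ideal.prod_eq_iInf_of_pairwise_isCoprime (s := Finset.univ)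
      (J := fun o => J + fam I p o ^ l) (fun a _ b _ hab => hc' hab)
    simp only [Finset.mem_univ, iInf_pos] at h1
    rw [← h1]
    refine (prod_sup_le J _ _).trans (sup_le le_rfl ?_)
    rw [Finset.prod_pow]
    exact (Ideal.pow_le_pow_right hl).trans hN
  have hJ : J = (J + I ^ l) ⊓ ⨅ i : Fin s, (J + mIdeal (p i) ^ l) := by
    apply le_antisymm
    · exact le_inf le_sup_left (le_iInf fun i => le_sup_left)
    · rw [iInf_option] at hinf
      exact hinf
  refine ⟨?_, hJ⟩
  let φ : MvPolynomial (Fin n) ℂ →ₐ[ℂ] (MvPolynomial (Fin n) ℂ ⧸ (J + I ^ l)) ×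
      (∀ i : Fin s, MvPolynomial (Fin n) ℂ ⧸ (J + mIdeal (p i) ^ l)) :=
    (Ideal.Quotient.mkₐ ℂ (J + I ^ l)).prod
      (Pi.algHom ℂ _ fun i => Ideal.Quotient.mkₐ ℂ (J + mIdeal (p i) ^ l))
  have hφ : ∀ f, φ f = (Ideal.Quotient.mk (J + I ^ l) f,
             fun i => Ideal.Quotient.mk (J + mIdeal (p i) ^ l) f) := fun f => rfl
  have hker : ∀ f, φ f = 0 ↔ f ∈ J := by
    intro f
    rw [hφ, Prod.mk_eq_zero, funext_iff]
    simp only [Pi.zero_apply, Ideal.Quotient.eq_zero_iff_mem]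
    conv_rhs => rw [hJ]
    rw [Submodule.mem_inf, Submodule.mem_iInf]
  let ψ := Ideal.Quotient.liftₐ J φ (fun a ha => (hker a).2 ha)
  have hψ : ∀ f, ψ (Ideal.Quotient.mk J f) = φ f := fun f => rfl
  refine ⟨AlgEquiv.ofBijective ψ ⟨?_, ?_⟩, fun f => rfl⟩
  · rw [injective_iff_map_eq_zero]
    intro a ha
    obtain ⟨f, rfl⟩ := Ideal.Quotient.mk_surjective a
    rw [hψ, hker] at ha
    exact Ideal.Quotient.eq_zero_iff_mem.2 ha
  · rintro ⟨a, b⟩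
    obtain ⟨a, rfl⟩ := Ideal.Quotient.mk_surjective a
    choose b' hb' using fun i => Ideal.Quotient.mk_surjective (b i)
    obtain ⟨y, hy⟩ := Ideal.quotientInfToPiQuotient_surj hc'
      (fun o => Ideal.Quotient.mk _ (o.elim a b'))
    obtain ⟨f, rfl⟩ := Ideal.Quotient.mk_surjective y
    refine ⟨Ideal.Quotient.mk J f, ?_⟩
    rw [hψ, hφ]
    refine Prod.ext (congrFun hy none) (funext fun i => ?_)
    exact (congrFun hy (some i)).trans (hb' i)
end

section
/- Let J_ℝ ⊆ I_ℝ be ideals in ℝ[x] = ℝ[x₁,…,xₙ] such that dim_ℝ ℝ[x]/(J_ℝ:I_ℝ) < ∞ and (J_ℝ:I_ℝ) + I_ℝ = ℝ[x], and let J_ℂ, I_ℂ ⊆ ℂ[x] be their complexifications. Write V(J_ℂ) \ V(I_ℂ) = {p₁,…,p_m} ∪ {q₁, q̄₁, …, q_r, q̄_r}, where p₁,…,p_m are the real points and q₁, q̄₁, …, q_r, q̄_r are the non-real points, which come in complex-conjugate pairs. Then for all sufficiently large positive integers k, the homomorphism sending f ∈ ℝ[x] to the tuple of its residue classes induces an isomorphism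 of ℝ-algebras ℝ[x]/(J_ℝ:I_ℝ) ≅ (∏_{i=1}^{m} ℝ[x]/(J_ℝ + m_{ℝ,pᵢ}ᵏ)) × (∏_{j=1}^{r} ℂ[x]/(J_ℂ + m_{ℂ,q_j}ᵏ)), where each complex factor is regarded as an ℝ-algebra. -/
set_option synthInstance.maxHeartbeats 1000000
set_option maxHeartbeats 1000000

open MvPolynomial

/-- The coefficient inclusion `ℝ[x₁,…,xₙ] ↪ ℂ[x₁,…,xₙ]`. -/
noncomputable def realToComplex (n : ℕ) :
    MvPolynomial (Fin n) ℝ →+* MvPolynomial (Fin n) ℂ :=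
  MvPolynomial.map (algebraMap ℝ ℂ)

/-- The zero set `V(S)` of an ideal of `ℂ[x₁,…,xₙ]`. -/
def zeroSetC {n : ℕ} (S : Ideal (MvPolynomial (Fin n) ℂ)) : Set (Fin n → ℂ) :=
  {p | ∀ f ∈ S, eval p f = 0}

/-- For `p ∈ ℝⁿ`, the ideal `m_{ℝ,p}` of real polynomials vanishing at `p`. -/
noncomputable def mR {n : ℕ} (p : Fin n → ℝ) : Ideal (MvPolynomial (Fin n) ℝ) :=
  RingHom.ker (eval p : MvPolynomial (Fin n) ℝ →+* ℝ)

/-- For `q ∈ ℂⁿ`, the ideal `m_{ℂ,q}` of complex polynomials vanishing at `q`. -/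
noncomputable def mC {n : ℕ} (q : Fin n → ℂ) : Ideal (MvPolynomial (Fin n) ℂ) :=
  RingHom.ker (eval q : MvPolynomial (Fin n) ℂ →+* ℂ)

namespace Stmt11

variable {n : ℕ}

/-- Conjugation of coefficients. -/
noncomputable def cj (n : ℕ) : MvPolynomial (Fin n) ℂ →+* MvPolynomial (Fin n) ℂ :=
  MvPolynomial.map (starRingEnd ℂ)

lemma cj_real (f : MvPolynomial (Fin n) ℝ) : cj n (realToComplex n f) = realToComplex n f := by
  unfold cj realToComplex
  rw [MvPolynomial.map_map]
  congr 2
  ext x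
  simp

lemma cj_cj (f : MvPolynomial (Fin n) ℂ) : cj n (cj n f) = f := by
  unfold cj
  rw [MvPolynomial.map_map]
  have : (starRingEnd ℂ).comp (starRingEnd ℂ) = RingHom.id ℂ := by
    ext x; simp
  rw [this, MvPolynomial.map_id]

lemma cj_CI : cj n (C Complex.I) = - C Complex.I := by
  simp [cj]

lemma eval_cj (x : Fin n → ℂ) (f : MvPolynomial (Fin n) ℂ) :
    eval (fun t => starRingEnd ℂ (x t)) (cj n f) = starRingEnd ℂ (eval x f) := by
  unfold cj
  rw [MvPolynomial.eval_map]
  exact (MvPolynomial.eval₂_comp_left (starRingEnd ℂ) (RingHom.id ℂ) x f).symm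

lemma r2c_inj : Function.Injective (realToComplex n) :=
  MvPolynomial.map_injective _ (algebraMap ℝ ℂ).injective

lemma eval_r2c (x : Fin n → ℝ) (f : MvPolynomial (Fin n) ℝ) :
    eval (fun t => ((x t : ℝ) : ℂ)) (realToComplex n f) = ((eval x f : ℝ) : ℂ) := by
  unfold realToComplex
  rw [MvPolynomial.eval_map]
  exact (MvPolynomial.eval₂_comp_left (algebraMap ℝ ℂ) (RingHom.id ℝ) x f).symm

lemma CI_sq : (C Complex.I : MvPolynomial (Fin n) ℂ) * C Complex.I = -1 := by
  rw [← C_mul, Complex.I_mul_I]; simp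

lemma exists_decomp (F : MvPolynomial (Fin n) ℂ) :
    ∃ f g : MvPolynomial (Fin n) ℝ, F = realToComplex n f + C Complex.I * realToComplex n g := by
  induction F using MvPolynomial.induction_on with
  | C a =>
    refine ⟨C a.re, C a.im, ?_⟩
    simp only [realToComplex, MvPolynomial.map_C, ← C_mul, ← C_add]
    congr 1
    simp [mul_comm Complex.I]
  | add p q hp hq =>
    obtain ⟨f, g, rfl⟩ := hp
    obtain ⟨f', g', rfl⟩ := hq
    refine ⟨f + f', g + g', ?_⟩
    simp only [map_add]; ring
  | mul_X p t hp =>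
    obtain ⟨f, g, rfl⟩ := hp
    refine ⟨f * X t, g * X t, ?_⟩
    have : realToComplex n (X t) = X t := by simp [realToComplex]
    simp only [map_mul, this]; ring

lemma decomp_zero {f g : MvPolynomial (Fin n) ℝ}
    (h : realToComplex n f + C Complex.I * realToComplex n g = 0) : f = 0 := by
  have h2 := congrArg (cj n) h
  simp only [map_add, map_mul, cj_real, cj_CI, map_zero] at h2
  have h3 : realToComplex n (f + f) = 0 := by
    rw [map_add]; linear_combination h + h2
  have h4 := r2c_inj (h3.trans (map_zero _).symm)
  rw [← two_mul] at h4
  exact (mul_eq_zero.mp h4).resolve_left two_ne_zero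

lemma decomp_uniq {f g f' g' : MvPolynomial (Fin n) ℝ}
    (h : realToComplex n f + C Complex.I * realToComplex n g
      = realToComplex n f' + C Complex.I * realToComplex n g') : f = f' := by
  refine sub_eq_zero.mp (decomp_zero (f := f - f') (g := g - g') ?_)
  simp only [map_sub]; linear_combination h

lemma mem_map_decomp (S : Ideal (MvPolynomial (Fin n) ℝ)) {F : MvPolynomial (Fin n) ℂ}
    (hF : F ∈ Ideal.map (realToComplex n) S) :
    ∃ f ∈ S, ∃ g ∈ S, F = realToComplex n f + C Complex.I * realToComplex n g := by
  induction hF using Submodule.span_induction with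
  | mem x hx =>
    obtain ⟨f, hf, rfl⟩ := hx
    exact ⟨f, hf, 0, S.zero_mem, by simp⟩
  | zero => exact ⟨0, S.zero_mem, 0, S.zero_mem, by simp⟩
  | add x y _ _ hx hy =>
    obtain ⟨f, hf, g, hg, rfl⟩ := hx
    obtain ⟨f', hf', g', hg', rfl⟩ := hy
    refine ⟨f + f', S.add_mem hf hf', g + g', S.add_mem hg hg', ?_⟩
    simp only [map_add]; ring
  | smul a x _ hx =>
    obtain ⟨f, hf, g, hg, rfl⟩ := hx
    obtain ⟨u, v, rfl⟩ := exists_decomp a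
    refine ⟨u * f - v * g, S.sub_mem (S.mul_mem_left _ hf) (S.mul_mem_left _ hg),
      u * g + v * f, S.add_mem (S.mul_mem_left _ hg) (S.mul_mem_left _ hf), ?_⟩
    simp only [map_add, map_sub, map_mul, smul_eq_mul]
    linear_combination (realToComplex n v * realToComplex n g) * CI_sq (n := n)

lemma mem_of_map {S : Ideal (MvPolynomial (Fin n) ℝ)} {f : MvPolynomial (Fin n) ℝ}
    (hF : realToComplex n f ∈ Ideal.map (realToComplex n) S) : f ∈ S := by
  obtain ⟨f', hf', g, _, h⟩ := mem_map_decomp S hF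
  have : f = f' := decomp_uniq (g := 0) (g' := g) (by simpa using h)
  exact this ▸ hf'

lemma mem_mC {x : Fin n → ℂ} {f : MvPolynomial (Fin n) ℂ} : f ∈ mC x ↔ eval x f = 0 :=
  RingHom.mem_ker

lemma mem_mR {x : Fin n → ℝ} {f : MvPolynomial (Fin n) ℝ} : f ∈ mR x ↔ eval x f = 0 :=
  RingHom.mem_ker

lemma mC_real (x : Fin n → ℝ) :
    mC (fun t => ((x t : ℝ) : ℂ)) = Ideal.map (realToComplex n) (mR x) := by
  apply le_antisymm
  · intro F hF
    obtain ⟨f, g, rfl⟩ := exists_decomp F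
    rw [mem_mC, map_add, map_mul, eval_r2c, eval_r2c, eval_C] at hF
    have h1 : eval x f = 0 := by simpa using congrArg Complex.re hF
    have h2 : eval x g = 0 := by simpa using congrArg Complex.im hF
    exact Ideal.add_mem _ (Ideal.mem_map_of_mem _ (mem_mR.2 h1))
      (Ideal.mul_mem_left _ _ (Ideal.mem_map_of_mem _ (mem_mR.2 h2)))
  · rw [Ideal.map_le_iff_le_comap]
    intro f hf
    rw [Ideal.mem_comap, mem_mC, eval_r2c, mem_mR.1 hf]; simp

lemma cj_mem_pow {x : Fin n → ℂ} {k : ℕ} {f : MvPolynomial (Fin n) ℂ} (hf : f ∈ mC x ^ k) :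
    cj n f ∈ mC (fun t => starRingEnd ℂ (x t)) ^ k := by
  have h : Ideal.map (cj n) (mC x) ≤ mC (fun t => starRingEnd ℂ (x t)) := by
    rw [Ideal.map_le_iff_le_comap]
    intro g hg
    rw [Ideal.mem_comap, mem_mC, eval_cj, mem_mC.1 hg, map_zero]
  have := Ideal.mem_map_of_mem (cj n) hf
  rw [Ideal.map_pow] at this
  exact Ideal.pow_right_mono h k this

lemma cj_mem_map {S : Ideal (MvPolynomial (Fin n) ℝ)} {F : MvPolynomial (Fin n) ℂ}
    (hF : F ∈ Ideal.map (realToComplex n) S) : cj n F ∈ Ideal.map (realToComplex n) S := by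
  obtain ⟨f, hf, g, hg, rfl⟩ := mem_map_decomp S hF
  simp only [map_add, map_mul, cj_real]
  exact Ideal.add_mem _ (Ideal.mem_map_of_mem _ hf)
      (Ideal.mul_mem_left _ _ (Ideal.mem_map_of_mem _ hg))

lemma coprime_mC {x y : Fin n → ℂ} (h : x ≠ y) : IsCoprime (mC x) (mC y) := by
  have hmax : ∀ z : Fin n → ℂ, (mC z).IsMaximal := fun z =>
    RingHom.ker_isMaximal_of_surjective _ (fun c => ⟨C c, by simp⟩)
  have := hmax x
  have := hmax y
  apply Ideal.isCoprime_of_isMaximal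
  intro he
  apply h
  funext t
  have h1 : (X t - C (x t) : MvPolynomial (Fin n) ℂ) ∈ mC x := by rw [mem_mC]; simp
  rw [he, mem_mC] at h1
  simp at h1
  exact (sub_eq_zero.mp h1).symm

lemma prod_sup_le {R ι : Type*} [CommRing R] (Q : Ideal R) (M : ι → Ideal R) (s : Finset ι) :
    ∏ i ∈ s, (Q ⊔ M i) ≤ Q ⊔ ∏ i ∈ s, M i := by
  classical
  induction s using Finset.induction_on with
  | empty => simp
  | insert a s ha ih =>
    rw [Finset.prod_insert ha, Finset.prod_insert ha]
    refine (Ideal.mul_mono_right ih).trans ?_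
    rw [Ideal.sup_mul]
    refine sup_le (Ideal.mul_le_left.trans le_sup_left) ?_
    rw [Ideal.mul_sup]
    exact sup_le (Ideal.mul_le_right.trans le_sup_left) le_sup_right

/-- Global from local: intersecting the `Q + m_x^k` gives `Q`. -/
lemma exists_bound {ι : Type} [Fintype ι] (Q : Ideal (MvPolynomial (Fin n) ℂ))
    (P : ι → Fin n → ℂ) (hP : Function.Injective P) (hQ : zeroSetC Q ⊆ Set.range P) :
    ∃ K : ℕ, ∀ k, K ≤ k → ∀ f, (∀ i, f ∈ Q ⊔ mC (P i) ^ k) → f ∈ Q := by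
  have hrad : (∏ i, mC (P i)) ≤ Q.radical := by
    rw [← MvPolynomial.vanishingIdeal_zeroLocus_eq_radical (K := ℂ) Q]
    intro f hf x hx
    obtain ⟨i, rfl⟩ := hQ (show x ∈ zeroSetC Q from fun g hg => by
      have := hx g hg
      simpa [MvPolynomial.aeval_eq_eval] using this)
    have h1 : f ∈ mC (P i) := (Ideal.prod_le_inf.trans (Finset.inf_le (Finset.mem_univ i))) hf
    simpa [MvPolynomial.aeval_eq_eval] using mem_mC.1 h1
  obtain ⟨K, hK⟩ := Ideal.exists_pow_le_of_le_radical_of_fg hrad (IsNoetherian.noetherian _)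
  refine ⟨K, fun k hk f hf => ?_⟩
  have h1 : f ∈ ∏ i, (Q ⊔ mC (P i) ^ k) := by
    rw [Ideal.prod_eq_iInf_of_pairwise_isCoprime]
    · simpa [Ideal.mem_iInf] using hf
    · intro i _ j _ hij
      have := (coprime_mC (hP.ne hij)).pow (m := k) (n := k)
      rw [Ideal.isCoprime_iff_sup_eq] at this
      change IsCoprime _ _
      rw [Ideal.isCoprime_iff_sup_eq, eq_top_iff, ← this]
      exact sup_le_sup le_sup_right le_sup_right
  have h2 := prod_sup_le _ _ _ h1
  rw [Finset.prod_pow] at h2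
  exact (sup_le le_rfl ((Ideal.pow_le_pow_right hk).trans hK)) h2

/-- `Q ⊆ J + m^k` when `b Q ⊆ J`, `a ∈ m`, `a + b = 1`. -/
lemma mem_sup_pow {R : Type*} [CommRing R] {J M : Ideal R} {a b f : R} (hab : a + b = 1)
    (ha : a ∈ M) (hfb : f * b ∈ J) (k : ℕ) : f ∈ J + M ^ k := by
  have hd : b ∣ 1 - a ^ k := by
    have := sub_dvd_pow_sub_pow 1 a k
    rw [one_pow] at this
    rwa [show b = 1 - a by rw [← hab]; ring]
  obtain ⟨c, hc⟩ := hd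
  have : f = (f * b) * c + f * a ^ k := by linear_combination f * hc
  rw [this]
  exact Submodule.add_mem_sup (Ideal.mul_mem_right _ _ hfb)
    (Ideal.mul_mem_left _ _ (Ideal.pow_mem_pow ha k))

end Stmt11

/-- Theorem 11: with `V(J_ℂ) \ V(I_ℂ) = {p₁,…,p_m} ∪ {q₁,q̄₁,…,q_r,q̄_r}`
(`pᵢ` real, `q_j` non-real, coming in conjugate pairs), for all large `k` the
natural map induces an `ℝ`-algebra isomorphism
`ℝ[x]/(J_ℝ:I_ℝ) ≅ (∏ᵢ ℝ[x]/(J_ℝ + m_{ℝ,pᵢ}ᵏ)) × (∏ⱼ ℂ[x]/(J_ℂ + m_{ℂ,q_j}ᵏ))`. -/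
theorem stmt_11 {n : ℕ} (JR IR : Ideal (MvPolynomial (Fin n) ℝ)) (hJI : JR ≤ IR)
    (hfin : FiniteDimensional ℝ (MvPolynomial (Fin n) ℝ ⧸ JR.colon IR))
    (hsum : JR.colon IR + IR = ⊤)
    (m r : ℕ) (p : Fin m → (Fin n → ℝ)) (q : Fin r → (Fin n → ℂ))
    (hpinj : Function.Injective p) (hqinj : Function.Injective q)
    (hqconj : ∀ j j' : Fin r, (fun t => starRingEnd ℂ (q j t)) ≠ q j')
    (hrange :
      zeroSetC (Ideal.map (realToComplex n) JR) \
          zeroSetC (Ideal.map (realToComplex n) IR) =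
        (Set.range fun i => fun t => ((p i t : ℝ) : ℂ)) ∪ Set.range q ∪
          Set.range fun j => fun t => starRingEnd ℂ (q j t)) :
    ∃ K : ℕ, 0 < K ∧ ∀ k : ℕ, K ≤ k →
      ∃ e : (MvPolynomial (Fin n) ℝ ⧸ JR.colon IR) ≃ₐ[ℝ]
          (∀ i : Fin m, MvPolynomial (Fin n) ℝ ⧸ (JR + mR (p i) ^ k)) ×
          (∀ j : Fin r,
            MvPolynomial (Fin n) ℂ ⧸ (Ideal.map (realToComplex n) JR + mC (q j) ^ k)),
        ∀ f : MvPolynomial (Fin n) ℝ,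
          e (Ideal.Quotient.mk (JR.colon IR) f) =
            (fun i => Ideal.Quotient.mk (JR + mR (p i) ^ k) f,
             fun j => Ideal.Quotient.mk (Ideal.map (realToComplex n) JR + mC (q j) ^ k)
               (realToComplex n f)) := by
  classical
  obtain ⟨a, ha, b, hb, hab⟩ : ∃ a ∈ JR.colon IR, ∃ b ∈ IR, a + b = 1 := by
    have : (1 : MvPolynomial (Fin n) ℝ) ∈ JR.colon IR ⊔ IR := by
      rw [← Submodule.add_eq_sup, hsum]; trivial
    exact Submodule.mem_sup.mp this
  have hJQ : JR ≤ JR.colon IR := Ideal.le_colon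
  have hmul : ∀ f ∈ JR.colon IR, ∀ g ∈ IR, f * g ∈ JR := fun f hf g hg =>
    Submodule.mem_colon.mp hf g hg
  set Q : Ideal (MvPolynomial (Fin n) ℝ) := JR.colon IR with hQdef
  set φ := realToComplex n with hφ
  -- the points
  let P : Fin m ⊕ (Fin r ⊕ Fin r) → Fin n → ℂ :=
    Sum.elim (fun i t => ((p i t : ℝ) : ℂ)) (Sum.elim q (fun j t => starRingEnd ℂ (q j t)))
  have hnr : ∀ i j, (fun t => ((p i t : ℝ) : ℂ)) ≠ q j := by
    intro i j h
    apply hqconj j j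
    rw [← h]
    funext t
    simp
  have hnr' : ∀ i j, (fun t => ((p i t : ℝ) : ℂ)) ≠ (fun t => starRingEnd ℂ (q j t)) := by
    intro i j h
    apply hnr i j
    funext t
    have := congrArg (starRingEnd ℂ) (congrFun h t)
    simpa using this
  have hPinj : Function.Injective P := by
    rintro (i | j | j) (i' | j' | j') h
    · congr 1
      apply hpinj
      funext t
      exact Complex.ofReal_injective (congrFun h t)
    · exact absurd h (hnr i j')
    · exact absurd h (hnr' i j')
    · exact absurd h.symm (hnr i' j)
    · rw [hqinj (show q j = q j' from h)]
    · exact absurd h.symm (hqconj j' j)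
    · exact absurd h.symm (hnr' i' j)
    · exact absurd h (hqconj j j')
    · have : j = j' := hqinj (by
        funext t
        exact (starRingEnd ℂ).injective (congrFun h t))
      rw [this]
  have hrange' : zeroSetC (Ideal.map φ JR) \ zeroSetC (Ideal.map φ IR) = Set.range P := by
    rw [hrange, Set.Sum.elim_range, Set.Sum.elim_range, Set.union_assoc]
  have hVQ : zeroSetC (Ideal.map φ Q) ⊆ Set.range P := by
    rw [← hrange']
    intro x hx
    refine ⟨fun f hf => hx f (Ideal.map_mono hJQ hf), fun hx' => ?_⟩
    have h1 := hx _ (Ideal.mem_map_of_mem φ ha)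
    have h2 := hx' _ (Ideal.mem_map_of_mem φ hb)
    have h3 : eval x (φ (a + b)) = 1 := by rw [hab]; simp
    rw [map_add, map_add, h1, h2] at h3
    simp at h3
  have hPa : ∀ s, eval (P s) (φ a) = 0 := by
    intro s
    have hs : P s ∈ zeroSetC (Ideal.map φ JR) \ zeroSetC (Ideal.map φ IR) := by
      rw [hrange']; exact ⟨s, rfl⟩
    by_contra hne
    apply hs.2
    intro F hF
    have : φ a * F ∈ Ideal.map φ JR := by
      obtain ⟨f, hf, g, hg, rfl⟩ := Stmt11.mem_map_decomp IR hF
      have : φ a * (φ f + C Complex.I * φ g) = φ (a * f) + C Complex.I * φ (a * g) := by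
        simp only [map_mul]; ring
      rw [← hφ, this]
      exact Ideal.add_mem _ (Ideal.mem_map_of_mem _ (hmul a ha f hf))
        (Ideal.mul_mem_left _ _ (Ideal.mem_map_of_mem _ (hmul a ha g hg)))
    have h0 := hs.1 _ this
    rw [map_mul] at h0
    exact (mul_eq_zero.mp h0).resolve_left hne
  obtain ⟨K, hK⟩ := Stmt11.exists_bound (Ideal.map φ Q) P hPinj hVQ
  refine ⟨K + 1, Nat.succ_pos _, fun k hk => ?_⟩
  have hk' : K ≤ k := by omega
  let ψ : MvPolynomial (Fin n) ℝ →ₐ[ℝ]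
      (∀ i : Fin m, MvPolynomial (Fin n) ℝ ⧸ (JR + mR (p i) ^ k)) ×
      (∀ j : Fin r, MvPolynomial (Fin n) ℂ ⧸ (Ideal.map φ JR + mC (q j) ^ k)) :=
    { toFun := fun f => (fun i => Ideal.Quotient.mk (JR + mR (p i) ^ k) f,
        fun j => Ideal.Quotient.mk (Ideal.map φ JR + mC (q j) ^ k) (φ f))
      map_one' := by ext <;> simp
      map_mul' := fun x y => by ext <;> simp
      map_zero' := by ext <;> simp
      map_add' := fun x y => by ext <;> simp
      commutes' := fun c => by
        ext j
        · rfl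
        · change Ideal.Quotient.mk _ (φ (C c)) = Ideal.Quotient.mk _ (algebraMap ℝ _ c)
          congr 1
          simp only [hφ, realToComplex, MvPolynomial.map_C]
          rfl }
  have hψ1 : ∀ f i, (ψ f).1 i = Ideal.Quotient.mk (JR + mR (p i) ^ k) f := fun _ _ => rfl
  have hψ2 : ∀ f j, (ψ f).2 j = Ideal.Quotient.mk (Ideal.map φ JR + mC (q j) ^ k) (φ f) :=
    fun _ _ => rfl
  have hker : ∀ f, f ∈ Q → ψ f = 0 := by
    intro f hf
    refine Prod.ext (funext fun i => ?_) (funext fun j => ?_)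
    · rw [hψ1]
      refine Ideal.Quotient.eq_zero_iff_mem.2 (Stmt11.mem_sup_pow hab ?_ (hmul f hf b hb) k)
      rw [Stmt11.mem_mR]
      have h := hPa (Sum.inl i)
      have h' := Stmt11.eval_r2c (p i) a
      rw [← hφ] at h'
      exact Complex.ofReal_injective (h'.symm.trans h)
    · rw [hψ2]
      refine Ideal.Quotient.eq_zero_iff_mem.2
        (Stmt11.mem_sup_pow (a := φ a) (b := φ b) ?_ ?_ ?_ k)
      · rw [← map_add, hab, map_one]
      · exact Stmt11.mem_mC.2 (hPa (Sum.inr (Sum.inl j)))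
      · rw [← map_mul]
        exact Ideal.mem_map_of_mem _ (hmul f hf b hb)
  have hinj : ∀ f, ψ f = 0 → f ∈ Q := by
    intro f hf
    apply Stmt11.mem_of_map
    apply hK k hk'
    have hq : ∀ j, φ f ∈ Ideal.map φ Q ⊔ mC (q j) ^ k := by
      intro j
      have h := congrFun (congrArg Prod.snd hf) j
      rw [hψ2] at h
      have hle : Ideal.map φ JR ⊔ mC (q j) ^ k ≤ Ideal.map φ Q ⊔ mC (q j) ^ k :=
        sup_le_sup_right (Ideal.map_mono hJQ) _
      exact hle (Ideal.Quotient.eq_zero_iff_mem.1 h)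
    rintro (i | j | j)
    · have h := congrFun (congrArg Prod.fst hf) i
      rw [hψ1] at h
      have h2 : f ∈ Q ⊔ mR (p i) ^ k :=
        sup_le_sup_right hJQ _ (Ideal.Quotient.eq_zero_iff_mem.1 h)
      have h3 := Ideal.mem_map_of_mem φ h2
      rw [Ideal.map_sup, Ideal.map_pow, hφ, ← Stmt11.mC_real] at h3
      exact h3
    · exact hq j
    · obtain ⟨u, hu, v, hv, huv⟩ := Submodule.mem_sup.mp (hq j)
      have h3 := congrArg (Stmt11.cj n) huv
      rw [map_add, hφ, Stmt11.cj_real] at h3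
      rw [hφ, ← h3]
      exact Submodule.add_mem_sup (Stmt11.cj_mem_map hu) (Stmt11.cj_mem_pow hv)
  have hsurj : Function.Surjective ψ := by
    rintro ⟨u, v⟩
    choose u' hu' using fun i => Ideal.Quotient.mk_surjective (u i)
    choose v' hv' using fun j => Ideal.Quotient.mk_surjective (v j)
    obtain ⟨F, hF⟩ := Ideal.exists_forall_sub_mem_ideal (I := fun s => mC (P s) ^ k)
      (fun s s' hs => (Stmt11.coprime_mC (hPinj.ne hs)).pow)
      (Sum.elim (fun i => φ (u' i)) (Sum.elim v' (fun j => Stmt11.cj n (v' j))))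
    obtain ⟨f, g, hfg⟩ := Stmt11.exists_decomp F
    refine ⟨f, Prod.ext (funext fun i => ?_) (funext fun j => ?_)⟩
    · refine (hψ1 f i).trans (Eq.trans ?_ (hu' i))
      refine Ideal.Quotient.eq.2 (le_sup_right (a := JR) ?_)
      have h : F - φ (u' i) ∈ mC (fun t => ((p i t : ℝ) : ℂ)) ^ k := hF (Sum.inl i)
      rw [Stmt11.mC_real, ← Ideal.map_pow] at h
      obtain ⟨f', hf', g', -, h'⟩ := Stmt11.mem_map_decomp _ h
      have : f - u' i = f' := Stmt11.decomp_uniq (g := g) (g' := g') (by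
        rw [← h', hfg, map_sub]; ring)
      rwa [this]
    · refine (hψ2 f j).trans (Eq.trans ?_ (hv' j))
      refine Ideal.Quotient.eq.2 (le_sup_right (a := Ideal.map φ JR) ?_)
      have h1 : F - v' j ∈ mC (q j) ^ k := hF (Sum.inr (Sum.inl j))
      have h2 : F - Stmt11.cj n (v' j) ∈ mC (fun t => starRingEnd ℂ (q j t)) ^ k :=
        hF (Sum.inr (Sum.inr j))
      have h3 := Stmt11.cj_mem_pow h2
      simp only [map_sub, Stmt11.cj_cj, Complex.conj_conj] at h3
      have h4 : φ f - v' j =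
          C (1 / 2 : ℂ) * ((F - v' j) + (Stmt11.cj n F - v' j)) := by
        have hc : (C (1 / 2 : ℂ) : MvPolynomial (Fin n) ℂ) * 2 = 1 := by
          rw [show (2 : MvPolynomial (Fin n) ℂ) = C 2 from (map_ofNat C 2).symm, ← C_mul]
          norm_num
        rw [hfg]
        simp only [map_add, map_mul, Stmt11.cj_real, Stmt11.cj_CI]
        linear_combination (-(φ f) + v' j) * hc
      rw [h4]
      exact Ideal.mul_mem_left _ _ (Ideal.add_mem _ h1 h3)
  refine ⟨AlgEquiv.ofBijective (Ideal.Quotient.liftₐ Q ψ hker) ⟨?_, ?_⟩, fun f => rfl⟩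
  · rw [injective_iff_map_eq_zero]
    intro x hx
    obtain ⟨f, rfl⟩ := Ideal.Quotient.mk_surjective x
    exact Ideal.Quotient.eq_zero_iff_mem.2 (hinj f hx)
  · intro y
    obtain ⟨f, hf⟩ := hsurj y
    exact ⟨Ideal.Quotient.mk Q f, hf⟩
end

section
/- Let J ⊆ I be ideals in ℂ[x] = ℂ[x₁,…,xₙ] with dim_ℂ ℂ[x]/(J:I) < ∞. Then V(J:I) is finite and V(J) \ V(I) = V(J:I) \ V(I). -/
open MvPolynomial

/-- If `J ⊆ I` and `dim_ℂ ℂ[x]/(J:I) < ∞` then `V(J:I)` is finite and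
`V(J) \ V(I) = V(J:I) \ V(I)`. -/
theorem stmt_15 {n : ℕ} (J I : Ideal (MvPolynomial (Fin n) ℂ)) (hJI : J ≤ I)
    (hfin : FiniteDimensional ℂ (MvPolynomial (Fin n) ℂ ⧸ J.colon I)) :
    (zeroSet (J.colon I)).Finite ∧
    zeroSet J \ zeroSet I = zeroSet (J.colon I) \ zeroSet I := by
  refine ⟨?_, ?_⟩
  · generalize J.colon (I : Set (MvPolynomial (Fin n) ℂ)) = K at hfin
    have key : ∀ i : Fin n, {z : ℂ | (minpoly ℂ (Ideal.Quotient.mkₐ ℂ K (X i))).IsRoot z}.Finite := by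
      intro i
      exact Polynomial.finite_setOf_isRoot (minpoly.ne_zero (Algebra.IsIntegral.isIntegral _))
    refine (Set.Finite.pi' key).subset ?_
    intro p hp i
    let φ : (MvPolynomial (Fin n) ℂ ⧸ K) →ₐ[ℂ] ℂ :=
      Ideal.Quotient.liftₐ K (aeval p) (fun f hf => by
        have := hp f hf
        simpa [aeval_eq_eval] using this)
    have h1 : φ (Ideal.Quotient.mkₐ ℂ K (X i)) = p i := by
      change aeval p (X i) = p i
      simp
    have h2 := congrArg φ (minpoly.aeval ℂ (Ideal.Quotient.mkₐ ℂ K (X i)))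
    rw [← Polynomial.aeval_algHom_apply, h1, map_zero] at h2
    simpa [Polynomial.IsRoot, Polynomial.coe_aeval_eq_eval] using h2
  · ext p
    constructor
    · rintro ⟨hp, hI⟩
      refine ⟨fun f hf => ?_, hI⟩
      have hI' : ∃ g ∈ I, eval p g ≠ 0 := by
        by_contra! h
        exact hI h
      obtain ⟨g, hg, hgp⟩ := hI'
      have h := hp _ (Submodule.mem_colon.mp hf g hg)
      rw [smul_eq_mul, map_mul] at h
      exact (mul_eq_zero.mp h).resolve_right hgp
    · rintro ⟨hp, hI⟩
      refine ⟨fun f hf => hp f (Submodule.mem_colon.mpr fun s _ => ?_), hI⟩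
      exact J.mul_mem_right s hf
end
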